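/- For every B > 0 and every complex-valued Schwartz function f on ℝ, one has ‖x²f‖ ≤ B⁻²‖−f'' + B²x²f‖ + √2·B⁻¹‖f‖, where x²f denotes the function x ↦ x²f(x) and f'' is the second derivative of f. -/

import Mathlib

open MeasureTheory

/-! Write `D` for differentiation and `X` for multiplication by `x`. Then `D` is skew-adjoint, `X`
is symmetric and `D X - X D = 1`, so that `⟪D²f, X²f⟫ = ‖f‖² - ‖X D f‖² ≤ ‖f‖²`. Expanding the
square, `‖-D²f + B²X²f‖² ≥ B⁴‖X²f‖² - 2B²⟪D²f, X²f⟫ ≥ B⁴‖X²f‖² - 2B²‖f‖²`, and the claim follows by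
taking square roots. -/

open SchwartzMap
open scoped RealInnerProductSpace

section InnerProductSpace

variable {E H : Type*} [AddCommGroup E] [NormedAddCommGroup H] [InnerProductSpace ℝ H]

theorem mul_norm_le_norm_neg_add_smul_add {u v : H} {b c : ℝ} (hb : 0 ≤ b) (hc : 0 ≤ c)
    (hvu : ⟪v, u⟫ ≤ c ^ 2) : b * ‖u‖ ≤ ‖-v + b • u‖ + √(2 * b) * c := by
  have norm_sq_expand : ‖-v + b • u‖ ^ 2 = ‖v‖ ^ 2 - 2 * b * ⟪v, u⟫ + (b * ‖u‖) ^ 2 := by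
    rw [norm_add_sq_real, inner_neg_left, real_inner_smul_right, norm_neg, norm_smul,
      Real.norm_of_nonneg hb]
    ring
  have cross_le : 2 * b * ⟪v, u⟫ ≤ (√(2 * b) * c) ^ 2 := by
    rw [mul_pow, Real.sq_sqrt (by positivity)]
    gcongr
  refine le_of_sq_le_sq ?_ (by positivity)
  calc (b * ‖u‖) ^ 2 ≤ ‖-v + b • u‖ ^ 2 + (√(2 * b) * c) ^ 2 := by linarith [sq_nonneg ‖v‖]
    _ ≤ (‖-v + b • u‖ + √(2 * b) * c) ^ 2 := by
      rw [add_sq']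
      exact le_add_of_nonneg_right (by positivity)

-- `J` places a common invariant domain `E` of the unbounded operators `D` and `X` in `H`.
variable (J : E →+ H) {D X : E → E}

theorem two_mul_inner_of_commutator_eq_one
    (hD : ∀ f g, ⟪J (D f), J g⟫ = -⟪J f, J (D g)⟫) (hX : ∀ f g, ⟪J (X f), J g⟫ = ⟪J f, J (X g)⟫)
    (hDX : ∀ f, D (X f) = f + X (D f)) (f : E) :
    2 * ⟪J (D f), J (X f)⟫ = -‖J f‖ ^ 2 := by
  have h : ⟪J (D f), J (X f)⟫ = -(‖J f‖ ^ 2 + ⟪J (D f), J (X f)⟫) := by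
    conv_lhs => rw [hD, hDX, map_add, inner_add_right, real_inner_self_eq_norm_sq, ← hX,
      real_inner_comm]
  linarith

theorem inner_sq_sq_of_commutator_eq_one
    (hD : ∀ f g, ⟪J (D f), J g⟫ = -⟪J f, J (D g)⟫) (hX : ∀ f g, ⟪J (X f), J g⟫ = ⟪J f, J (X g)⟫)
    (hDX : ∀ f, D (X f) = f + X (D f)) (f : E) :
    ⟪J (D (D f)), J (X (X f))⟫ = ‖J f‖ ^ 2 - ‖J (X (D f))‖ ^ 2 :=
  calc ⟪J (D (D f)), J (X (X f))⟫ = -⟪J (D f), J (X f + X (D (X f)))⟫ := by rw [hD, hDX]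
    _ = -(⟪J (D f), J (X f)⟫ + ⟪J (X (D f)), J (f + X (D f))⟫) := by
      rw [map_add, inner_add_right, ← hX (D f) (D (X f)), hDX]
    _ = -(2 * ⟪J (D f), J (X f)⟫) - ‖J (X (D f))‖ ^ 2 := by
      rw [map_add, inner_add_right, hX, real_inner_self_eq_norm_sq]
      ring
    _ = ‖J f‖ ^ 2 - ‖J (X (D f))‖ ^ 2 := by
      rw [two_mul_inner_of_commutator_eq_one J hD hX hDX, neg_neg]

end InnerProductSpace

section Schwartz

variable {E F V : Type*} [NormedAddCommGroup E] [NormedSpace ℝ E]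
  [NormedAddCommGroup F] [NormedSpace ℝ F] [NormedAddCommGroup V] [InnerProductSpace ℝ V]

theorem derivCLM_smulLeftCLM {r : ℝ → ℝ} (hr : r.HasTemperateGrowth)
    (hr' : (deriv r).HasTemperateGrowth) (f : 𝓢(ℝ, F)) :
    derivCLM ℝ F (smulLeftCLM F r f) =
      smulLeftCLM F (deriv r) f + smulLeftCLM F r (derivCLM ℝ F f) := by
  ext x
  have hrx : DifferentiableAt ℝ r x := hr.1.differentiable (by simp) x
  simp only [derivCLM_apply, smulLeftCLM_apply hr, add_apply, smulLeftCLM_apply_apply hr',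
    smulLeftCLM_apply_apply hr, deriv_fun_smul hrx f.differentiableAt, add_comm]

theorem derivCLM_smulLeftCLM_id (f : 𝓢(ℝ, F)) :
    derivCLM ℝ F (smulLeftCLM F (id : ℝ → ℝ) f) =
      f + smulLeftCLM F (id : ℝ → ℝ) (derivCLM ℝ F f) := by
  have hderiv : deriv (id : ℝ → ℝ) = fun _ ↦ 1 := deriv_id'
  rw [derivCLM_smulLeftCLM .id (hderiv ▸ .const 1), hderiv, smulLeftCLM_const]
  simp

theorem real_inner_toLp_toLp [MeasurableSpace E] [OpensMeasurableSpace E]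
    [SecondCountableTopologyEither E V] (μ : Measure E) [μ.HasTemperateGrowth] (f g : 𝓢(E, V)) :
    ⟪f.toLp 2 μ, g.toLp 2 μ⟫ = ∫ x, ⟪f x, g x⟫ ∂μ := by
  apply integral_congr_ae
  filter_upwards [f.coeFn_toLp 2 μ, g.coeFn_toLp 2 μ] with x hf hg
  rw [hf, hg]

theorem inner_toLp_smulLeftCLM_left [MeasurableSpace E] [OpensMeasurableSpace E]
    [SecondCountableTopologyEither E V] (μ : Measure E) [μ.HasTemperateGrowth] {r : E → ℝ}
    (hr : r.HasTemperateGrowth) (f g : 𝓢(E, V)) :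
    ⟪(smulLeftCLM V r f).toLp 2 μ, g.toLp 2 μ⟫ = ⟪f.toLp 2 μ, (smulLeftCLM V r g).toLp 2 μ⟫ := by
  simp only [real_inner_toLp_toLp, smulLeftCLM_apply_apply hr, real_inner_smul_left,
    real_inner_smul_right]

theorem inner_toLp_derivCLM_left (f g : 𝓢(ℝ, V)) :
    ⟪(derivCLM ℝ V f).toLp 2, g.toLp 2⟫ = -⟪f.toLp 2, (derivCLM ℝ V g).toLp 2⟫ := by
  rw [real_inner_toLp_toLp, real_inner_toLp_toLp, ← neg_eq_iff_eq_neg, eq_comm]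
  exact integral_bilinear_deriv_right_eq_neg_left f g (innerSL ℝ)

theorem inner_toLp_derivCLM_derivCLM_smulLeftCLM_id_le (f : 𝓢(ℝ, V)) :
    ⟪(derivCLM ℝ V (derivCLM ℝ V f)).toLp 2,
      (smulLeftCLM V (id : ℝ → ℝ) (smulLeftCLM V (id : ℝ → ℝ) f)).toLp 2⟫ ≤ ‖f.toLp 2‖ ^ 2 := by
  have h := inner_sq_sq_of_commutator_eq_one (toLpCLM ℝ V 2 volume).toLinearMap.toAddMonoidHom
    inner_toLp_derivCLM_left (inner_toLp_smulLeftCLM_left volume .id) derivCLM_smulLeftCLM_id f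
  exact h.trans_le (sub_le_self _ (sq_nonneg _))

theorem sq_mul_norm_toLp_smulLeftCLM_id_le {B : ℝ} (hB : 0 ≤ B) (f : 𝓢(ℝ, V)) :
    B ^ 2 * ‖(smulLeftCLM V (id : ℝ → ℝ) (smulLeftCLM V (id : ℝ → ℝ) f)).toLp 2‖ ≤
      ‖(-derivCLM ℝ V (derivCLM ℝ V f) +
          B ^ 2 • smulLeftCLM V (id : ℝ → ℝ) (smulLeftCLM V (id : ℝ → ℝ) f)).toLp 2‖ +
        √2 * B * ‖f.toLp 2‖ := by
  have h := mul_norm_le_norm_neg_add_smul_add (sq_nonneg B) (norm_nonneg _)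
    (inner_toLp_derivCLM_derivCLM_smulLeftCLM_id_le f)
  simpa only [← toLpCLM_apply (𝕜 := ℝ), map_add, map_neg, map_smul, Real.sqrt_mul zero_le_two,
    Real.sqrt_sq hB] using h

theorem stmt_2_general (B : ℝ) (hB : 0 < B) (f : 𝓢(ℝ, V)) :
    (eLpNorm (fun x : ℝ ↦ x ^ 2 • f x) 2 volume).toReal ≤
      B ^ (-2 : ℤ) *
          (eLpNorm (fun x : ℝ ↦ -deriv (deriv f) x + (B ^ 2 * x ^ 2) • f x) 2 volume).toReal +
        √2 * B⁻¹ * (eLpNorm f 2 volume).toReal := by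
  set p : 𝓢(ℝ, V) := smulLeftCLM V (id : ℝ → ℝ) (smulLeftCLM V (id : ℝ → ℝ) f) with hp
  set q : 𝓢(ℝ, V) := -derivCLM ℝ V (derivCLM ℝ V f) + B ^ 2 • p with hq
  have hp_coe : (fun x : ℝ ↦ x ^ 2 • f x) = p := by
    ext x
    simp [hp, smulLeftCLM_apply_apply .id, smul_smul, sq]
  have hq_coe : (fun x : ℝ ↦ -deriv (deriv f) x + (B ^ 2 * x ^ 2) • f x) = q := by
    have hderiv : ⇑(derivCLM ℝ V f) = deriv f := rfl
    ext x
    simp [hq, ← hp_coe, hderiv, mul_smul]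
  have key : B ^ 2 * ‖p.toLp 2‖ ≤ ‖q.toLp 2‖ + √2 * B * ‖f.toLp 2‖ :=
    sq_mul_norm_toLp_smulLeftCLM_id_le hB.le f
  rw [norm_toLp, norm_toLp, norm_toLp] at key
  rw [hp_coe, hq_coe]
  calc (eLpNorm p 2 volume).toReal = B ^ (-2 : ℤ) * (B ^ 2 * (eLpNorm p 2 volume).toReal) := by
        field_simp
    _ ≤ B ^ (-2 : ℤ) * ((eLpNorm q 2 volume).toReal + √2 * B * (eLpNorm f 2 volume).toReal) := by
      gcongr
    _ = B ^ (-2 : ℤ) * (eLpNorm q 2 volume).toReal + √2 * B⁻¹ * (eLpNorm f 2 volume).toReal := by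
      field_simp

end Schwartz

/-- For every B > 0 and every complex-valued Schwartz function f on ℝ,
‖x²f‖ ≤ B⁻²‖−f'' + B²x²f‖ + √2·B⁻¹‖f‖. -/
theorem stmt_2 (B : ℝ) (hB : 0 < B) (f : SchwartzMap ℝ ℂ) :
    (eLpNorm (fun x : ℝ => ((x ^ 2 : ℝ) : ℂ) * f x) 2 volume).toReal ≤
      B ^ (-2 : ℤ) * (eLpNorm (fun x : ℝ =>
          -(deriv (deriv f) x) + ((B ^ 2 * x ^ 2 : ℝ) : ℂ) * f x) 2 volume).toReal +
        Real.sqrt 2 * B⁻¹ * (eLpNorm (fun x : ℝ => f x) 2 volume).toReal := by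
  simpa only [Complex.real_smul] using stmt_2_general B hB f
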